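/- Under the corruption-size estimation setting: let n > 0, let γ ∈ (1/2, 1], let τ* = γn be the true number of uncorrupted samples and τ > τ* the estimated threshold with τ' = τ − ⌈n/2⌉ ≥ (2γ−1)n/2 ... Suppose S_t and S_* are subsets of {1,...,n} with |S_t \ S_*| ≤ (1−γ)n, and suppose every residual r_i for i ∈ S_t satisfies r_i² ≤ (64/τ')·∑_{j ∈ S_* ∩ S_t} r_j². Then ∑_{i ∈ S_t} r_i² ≤ (1 + 128(1−γ)/(2γ−1)) · ∑_{i ∈ S_*} r_i². -/

import Mathlib

section

variable {ι : Type*} [DecidableEq ι]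

theorem sum_le_one_add_card_sdiff_mul_mul_sum_inter {R : Type*} [Semiring R] [Preorder R]
    [IsOrderedAddMonoid R] {s t : Finset ι} {f : ι → R} {c : R}
    (h : ∀ i ∈ s \ t, f i ≤ c * ∑ j ∈ t ∩ s, f j) :
    ∑ i ∈ s, f i ≤ (1 + (s \ t).card * c) * ∑ j ∈ t ∩ s, f j := by
  have sum_sdiff_le : ∑ i ∈ s \ t, f i ≤ (s \ t).card * (c * ∑ j ∈ t ∩ s, f j) := by
    simpa only [nsmul_eq_mul] using Finset.sum_le_card_nsmul _ _ _ h
  calc ∑ i ∈ s, f i = ∑ j ∈ t ∩ s, f j + ∑ i ∈ s \ t, f i := by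
        rw [Finset.inter_comm, Finset.sum_inter_add_sum_sdiff]
    _ ≤ ∑ j ∈ t ∩ s, f j + (s \ t).card * (c * ∑ j ∈ t ∩ s, f j) := by gcongr
    _ = (1 + (s \ t).card * c) * ∑ j ∈ t ∩ s, f j := by rw [add_mul, one_mul, mul_assoc]

variable {K : Type*} [Field K] [LinearOrder K] [IsStrictOrderedRing K]

theorem mul_div_le_two_mul_mul_one_sub_div {n γ τ C d : K} (hn : 0 < n) (hγ : 1 / 2 < γ)
    (hγ_le_one : γ ≤ 1) (hC : 0 ≤ C) (hd : d ≤ (1 - γ) * n) (hτ : (2 * γ - 1) * n / 2 ≤ τ) :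
    d * (C / τ) ≤ 2 * C * (1 - γ) / (2 * γ - 1) := by
  have hgap : 0 < 2 * γ - 1 := by linarith
  have hτ_pos : 0 < τ := lt_of_lt_of_le (by positivity) hτ
  calc d * (C / τ) ≤ (1 - γ) * n * (C / ((2 * γ - 1) * n / 2)) := by gcongr
    _ = 2 * C * (1 - γ) / (2 * γ - 1) := by field_simp

theorem estimated_set_objective_bound_general {n γ τ C : K} (hn : 0 < n) (hγ : 1 / 2 < γ)
    (hC : 0 ≤ C) {f : ι → K} {s t : Finset ι} (hf : ∀ i ∈ t, 0 ≤ f i)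
    (hτ : (2 * γ - 1) * n / 2 ≤ τ) (hcard : ((s \ t).card : K) ≤ (1 - γ) * n)
    (hbound : ∀ i ∈ s \ t, f i ≤ C / τ * ∑ j ∈ t ∩ s, f j) :
    ∑ i ∈ s, f i ≤ (1 + 2 * C * (1 - γ) / (2 * γ - 1)) * ∑ i ∈ t, f i := by
  have hγ_le_one : γ ≤ 1 :=
    sub_nonneg.mp (nonneg_of_mul_nonneg_left ((Nat.cast_nonneg _).trans hcard) hn)
  have hcoeff : (s \ t).card * (C / τ) ≤ 2 * C * (1 - γ) / (2 * γ - 1) :=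
    mul_div_le_two_mul_mul_one_sub_div hn hγ hγ_le_one hC hcard hτ
  have hcoeff_nonneg : 0 ≤ 2 * C * (1 - γ) / (2 * γ - 1) :=
    div_nonneg (mul_nonneg (by positivity) (sub_nonneg.mpr hγ_le_one)) (by linarith)
  have hinter_nonneg : 0 ≤ ∑ j ∈ t ∩ s, f j :=
    Finset.sum_nonneg fun j hj ↦ hf j (Finset.mem_of_mem_inter_left hj)
  have hinter_le : ∑ j ∈ t ∩ s, f j ≤ ∑ j ∈ t, f j :=
    Finset.sum_le_sum_of_subset_of_nonneg Finset.inter_subset_left fun j hj _ ↦ hf j hj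
  calc ∑ i ∈ s, f i ≤ (1 + (s \ t).card * (C / τ)) * ∑ j ∈ t ∩ s, f j :=
        sum_le_one_add_card_sdiff_mul_mul_sum_inter hbound
    _ ≤ (1 + 2 * C * (1 - γ) / (2 * γ - 1)) * ∑ i ∈ t, f i := by gcongr

end

theorem estimated_set_objective_bound
    (n : ℕ) (hn : 0 < n) (γ : ℝ) (hγ : 1 / 2 < γ ∧ γ ≤ 1)
    (r : Fin n → ℝ) (hr : ∀ i, 0 ≤ r i)
    (St Sstar : Finset (Fin n))
    (τ' : ℝ) (hτ' : (2 * γ - 1) * (n : ℝ) / 2 ≤ τ')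
    (hdiff : ((St \ Sstar).card : ℝ) ≤ (1 - γ) * (n : ℝ))
    (hres : ∀ i ∈ St, (r i) ^ 2 ≤ (64 / τ') * ∑ j ∈ Sstar ∩ St, (r j) ^ 2)
    (hsub : ∑ j ∈ Sstar ∩ St, (r j) ^ 2 ≤ ∑ j ∈ Sstar, (r j) ^ 2) :
    ∑ i ∈ St, (r i) ^ 2 ≤
      (1 + 128 * (1 - γ) / (2 * γ - 1)) * ∑ i ∈ Sstar, (r i) ^ 2 := by
  rw [show (128 : ℝ) = 2 * 64 by norm_num]
  exact estimated_set_objective_bound_general (Nat.cast_pos.mpr hn) hγ.1 (by norm_num)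
    (fun i _ ↦ sq_nonneg (r i)) hτ' hdiff fun i hi ↦ hres i (Finset.sdiff_subset hi)
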